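/- Time translate estimate (Lemma 3.6): for all T > 0, L ≥ 0, g₀ ≥ 0, A > 0, B ≥ 0 and D ≥ 0 there exists a constant C ≥ 0, depending only on T, L, g₀, A, B, D, such that for every N ≥ 1, every discrete setting (V, m, τ) with Σ_{K∈V} m K ≤ A, every g Lipschitz with constant L and |g(0)| ≤ g₀, every initial datum with E[‖u⁰‖_m²] ≤ B and E[|u⁰|₁²] ≤ D, and every τ₀ ∈ (0, T): E[∫₀^{T−τ₀} ‖(u^l − M^l)(t+τ₀) − (u^l − M^l)(t)‖_m² dt] ≤ C·τ₀. -/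

import Mathlib

open MeasureTheory ProbabilityTheory

/-- Discrete `L²` norm squared: `‖w‖_m² = Σ_K m K · (w K)²`. -/
noncomputable def normSq {V : Type} [Fintype V] (m : V → ℝ) (w : V → ℝ) : ℝ :=
  ∑ K, m K * w K ^ 2

/-- Discrete `H¹` seminorm squared: `|w|₁² = (1/2) Σ_K Σ_L τ K L · (w K − w L)²`. -/
noncomputable def seminormSq {V : Type} [Fintype V] (τ : V → V → ℝ) (w : V → ℝ) : ℝ :=
  (1 / 2) * ∑ K, ∑ L, τ K L * (w K - w L) ^ 2

/-- The semi-implicit finite-volume scheme for the stochastic heat equation, in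
abstract graph form, together with all the structural assumptions of the paper:
cell measures `m`, symmetric nonnegative transmissibilities `τ`, time horizon
`T > 0` divided into `N ≥ 1` steps of size `Δt = T/N`, a discrete filtration
`G`, Gaussian increments `ΔW` (each `ΔW (n+1)` is `G (n+1)`-measurable,
independent of `G n`, centred with variance `Δt`), a Lipschitz nonlinearity `g`
(constant `L`), a square-integrable `G 0`-measurable initial datum `u 0`, and the
scheme equations defining `u (n+1)` from `u n`. -/
structure Scheme (V : Type) [Fintype V] [Nonempty V]
    (Ω : Type) [mΩ : MeasurableSpace Ω]
    (T L : ℝ) (g : ℝ → ℝ) (N : ℕ) where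
  P : Measure Ω
  probP : IsProbabilityMeasure P
  m : V → ℝ
  m_pos : ∀ K, 0 < m K
  τ : V → V → ℝ
  τ_symm : ∀ K L', τ K L' = τ L' K
  τ_nonneg : ∀ K L', 0 ≤ τ K L'
  τ_diag : ∀ K, τ K K = 0
  T_pos : 0 < T
  N_pos : 1 ≤ N
  L_nonneg : 0 ≤ L
  g_lip : ∀ r s : ℝ, |g r - g s| ≤ L * |r - s|
  G : ℕ → MeasurableSpace Ω
  G_le : ∀ n, G n ≤ mΩ
  G_mono : Monotone G
  ΔW : ℕ → Ω → ℝ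
  ΔW_meas : ∀ n, n < N → Measurable[G (n + 1)] (ΔW (n + 1))
  ΔW_indep : ∀ n, n < N →
    Indep (MeasurableSpace.comap (ΔW (n + 1)) Real.measurableSpace) (G n) P
  ΔW_law : ∀ n, n < N →
    P.map (ΔW (n + 1)) = gaussianReal 0 (Real.toNNReal (T / N))
  u : ℕ → Ω → V → ℝ
  u_meas : ∀ n, n ≤ N → Measurable[G n] (u n)
  u0_int : Integrable (fun ω => normSq m (u 0 ω)) P
  scheme : ∀ n, n < N → ∀ᵐ ω ∂P, ∀ K,
    m K / (T / N) * (u (n + 1) ω K - u n ω K)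
      + ∑ L', τ K L' * (u (n + 1) ω K - u (n + 1) ω L')
      = m K / (T / N) * g (u n ω K) * ΔW (n + 1) ω

/-- Index `n` of the time interval `[t_n, t_{n+1})` containing `t` (capped at
`N − 1`, matching the convention for the value at `t = T`). -/
noncomputable def timeIdx (T : ℝ) (N : ℕ) (t : ℝ) : ℕ :=
  min (Nat.floor (t / (T / N))) (N - 1)

/-- Left piecewise-constant time interpolant `u^l`. -/
noncomputable def ul {Ω V : Type} (T : ℝ) (N : ℕ)
    (u : ℕ → Ω → V → ℝ) (t : ℝ) (ω : Ω) : V → ℝ :=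
  u (timeIdx T N t) ω

/-- Left interpolated discrete stochastic integral
`M^l(t) K = Σ_{k=0}^{n−1} g(u^k K)·ΔW_{k+1}` for `t ∈ [t_n, t_{n+1})`. -/
noncomputable def Ml {Ω V : Type} (T : ℝ) (N : ℕ) (g : ℝ → ℝ)
    (u : ℕ → Ω → V → ℝ) (ΔW : ℕ → Ω → ℝ) (t : ℝ) (ω : Ω) (K : V) : ℝ :=
  ∑ k ∈ Finset.range (timeIdx T N t), g (u k ω K) * ΔW (k + 1) ω

/-!
The difference `u^l - M^l` contains no noise: from one grid point to the next it changes by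
`-Δt · A_h u^{n+1}`, where `A_h` is the (positive) discrete Laplacian. By Cauchy–Schwarz, and since
each grid point lies in `(t, t + τ₀]` only for a set of times `t` of measure at most `τ₀`, the time
translate is at most `τ₀ T ∑ Δt ‖A_h u^{n+1}‖_m²`.

This sum is controlled by the discrete `H¹` energy. Green's formula gives
`|w|₁² + 2 Δt ‖A_h w‖_m² ≤ |w + Δt A_h w|₁²`, and the right-hand side at `w = u^{n+1}` is
`|u^n + g(u^n) ΔW_{n+1}|₁²`. As `ΔW_{n+1}` is centred, independent of `u^n` and of variance `Δt`,
the expectation of the latter is at most `(1 + L² Δt) E|u^n|₁²`, and Gronwall's argument yields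
`∑ Δt E‖A_h u^{n+1}‖_m² ≤ ½ exp(L² T) E|u⁰|₁²`.
-/

section Graph

variable {V : Type*} [Fintype V]

/-- The discrete Laplacian of the weighted graph `(V, m, τ)`, with the sign that makes it positive
semidefinite: it is the finite-volume counterpart of `-Δ`. -/
noncomputable def discreteLaplacian (m : V → ℝ) (τ : V → V → ℝ) : (V → ℝ) →ₗ[ℝ] (V → ℝ) where
  toFun w K := (∑ L, τ K L * (w K - w L)) / m K
  map_add' w z := by
    ext K
    simp only [Pi.add_apply, ← add_div, ← Finset.sum_add_distrib]
    congr! 2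
    ring
  map_smul' a w := by
    ext K
    simp only [Pi.smul_apply, smul_eq_mul, RingHom.id_apply, mul_div_assoc', Finset.mul_sum]
    congr! 2
    ring

/-- The Dirichlet form of the weighted graph `(V, τ)`, i.e. the bilinear form whose quadratic form
is the squared discrete `H¹` seminorm `seminormSq τ`. -/
noncomputable def dirichletForm (τ : V → V → ℝ) : LinearMap.BilinForm ℝ (V → ℝ) :=
  LinearMap.mk₂ ℝ (fun w z => (1 / 2) * ∑ K, ∑ L, τ K L * ((w K - w L) * (z K - z L)))
    (fun w w' z => by
      simp only [Pi.add_apply, ← mul_add, ← Finset.sum_add_distrib]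
      congr! 3
      ring)
    (fun a w z => by
      simp only [Pi.smul_apply, smul_eq_mul, Finset.mul_sum]
      congr! 2
      ring)
    (fun w z z' => by
      simp only [Pi.add_apply, ← mul_add, ← Finset.sum_add_distrib]
      congr! 3
      ring)
    (fun a w z => by
      simp only [Pi.smul_apply, smul_eq_mul, Finset.mul_sum]
      congr! 2
      ring)

lemma discreteLaplacian_apply (m : V → ℝ) (τ : V → V → ℝ) (w : V → ℝ) (K : V) :
    discreteLaplacian m τ w K = (∑ L, τ K L * (w K - w L)) / m K :=
  rfl

lemma dirichletForm_apply (τ : V → V → ℝ) (w z : V → ℝ) :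
    dirichletForm τ w z = (1 / 2) * ∑ K, ∑ L, τ K L * ((w K - w L) * (z K - z L)) :=
  rfl

lemma dirichletForm_comm (τ : V → V → ℝ) (w z : V → ℝ) :
    dirichletForm τ w z = dirichletForm τ z w := by
  simp only [dirichletForm_apply, mul_comm (w _ - w _)]

lemma dirichletForm_eq_sum_mul_discreteLaplacian {m : V → ℝ} {τ : V → V → ℝ}
    (hm : ∀ K, m K ≠ 0) (hτ : ∀ K L, τ K L = τ L K) (w z : V → ℝ) :
    dirichletForm τ w z = ∑ K, m K * (discreteLaplacian m τ w K * z K) := by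
  have h_unfold : ∑ K, m K * (discreteLaplacian m τ w K * z K)
      = ∑ K, ∑ L, τ K L * (w K - w L) * z K := by
    refine Finset.sum_congr rfl fun K _ => ?_
    rw [discreteLaplacian_apply, ← mul_assoc, mul_div_cancel₀ _ (hm K), Finset.sum_mul]
  have h_swap : ∑ K, ∑ L, τ K L * (w K - w L) * z K = ∑ K, ∑ L, τ K L * (w L - w K) * z L := by
    rw [Finset.sum_comm]
    simp only [hτ]
  have h_double : ∑ K, ∑ L, τ K L * ((w K - w L) * (z K - z L))
      = (∑ K, ∑ L, τ K L * (w K - w L) * z K) + ∑ K, ∑ L, τ K L * (w L - w K) * z L := by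
    simp only [← Finset.sum_add_distrib]
    congr! 2
    ring
  rw [dirichletForm_apply, h_unfold, h_double, ← h_swap]
  ring

end Graph

section Norms

variable {V : Type} [Fintype V] {m : V → ℝ} {τ : V → V → ℝ}

lemma normSq_nonneg (hm : ∀ K, 0 ≤ m K) (w : V → ℝ) : 0 ≤ normSq m w :=
  Finset.sum_nonneg fun K _ => mul_nonneg (hm K) (sq_nonneg _)

lemma normSq_smul (a : ℝ) (w : V → ℝ) : normSq m (a • w) = a ^ 2 * normSq m w := by
  simp only [normSq, Pi.smul_apply, smul_eq_mul, Finset.mul_sum]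
  congr! 1
  ring

lemma seminormSq_nonneg (hτ : ∀ K L, 0 ≤ τ K L) (w : V → ℝ) : 0 ≤ seminormSq τ w :=
  mul_nonneg (by norm_num) (Finset.sum_nonneg fun K _ => Finset.sum_nonneg fun L _ =>
    mul_nonneg (hτ K L) (sq_nonneg _))

lemma seminormSq_eq_dirichletForm (w : V → ℝ) : seminormSq τ w = dirichletForm τ w w := by
  simp only [seminormSq, dirichletForm_apply, sq]

lemma seminormSq_add_smul (w h : V → ℝ) (x : ℝ) :
    seminormSq τ (w + x • h)
      = seminormSq τ w + x * (2 * dirichletForm τ w h) + x ^ 2 * seminormSq τ h := by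
  simp only [seminormSq_eq_dirichletForm, map_add, map_smul, LinearMap.add_apply,
    LinearMap.smul_apply, smul_eq_mul, dirichletForm_comm τ h w]
  ring

lemma seminormSq_comp_le_of_lipschitzWith (hτ : ∀ K L, 0 ≤ τ K L) {g : ℝ → ℝ} {c : NNReal}
    (hg : LipschitzWith c g) (w : V → ℝ) : seminormSq τ (g ∘ w) ≤ c ^ 2 * seminormSq τ w := by
  have h_sq (r s : ℝ) : (g r - g s) ^ 2 ≤ c ^ 2 * (r - s) ^ 2 := by
    rw [← mul_pow]
    refine sq_le_sq.2 ((hg.dist_le_mul r s).trans_eq ?_)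
    rw [abs_mul, NNReal.abs_eq, Real.dist_eq]
  simp only [seminormSq, Finset.mul_sum, Function.comp_apply]
  refine Finset.sum_le_sum fun K _ => Finset.sum_le_sum fun L _ => ?_
  linarith [mul_le_mul_of_nonneg_left (h_sq (w K) (w L)) (hτ K L)]

lemma normSq_le_normSq_add_smul_discreteLaplacian (hm : ∀ K, 0 < m K)
    (hτ_symm : ∀ K L, τ K L = τ L K) (hτ : ∀ K L, 0 ≤ τ K L) {d : ℝ} (hd : 0 ≤ d) (w : V → ℝ) :
    normSq m w ≤ normSq m (w + d • discreteLaplacian m τ w) := by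
  have h_expand : normSq m (w + d • discreteLaplacian m τ w)
      = normSq m w + 2 * d * seminormSq τ w + d ^ 2 * normSq m (discreteLaplacian m τ w) := by
    rw [seminormSq_eq_dirichletForm,
      dirichletForm_eq_sum_mul_discreteLaplacian (fun K => (hm K).ne') hτ_symm]
    simp only [normSq, Finset.mul_sum, ← Finset.sum_add_distrib, Pi.add_apply, Pi.smul_apply,
      smul_eq_mul]
    congr! 1
    ring
  have := mul_nonneg hd (seminormSq_nonneg hτ w)
  have := mul_nonneg (sq_nonneg d) (normSq_nonneg (fun K => (hm K).le) (discreteLaplacian m τ w))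
  linarith

lemma seminormSq_add_normSq_discreteLaplacian_le (hm : ∀ K, m K ≠ 0)
    (hτ_symm : ∀ K L, τ K L = τ L K) (hτ : ∀ K L, 0 ≤ τ K L) (d : ℝ) (w : V → ℝ) :
    seminormSq τ w + 2 * (d * normSq m (discreteLaplacian m τ w))
      ≤ seminormSq τ (w + d • discreteLaplacian m τ w) := by
  have h_cross : dirichletForm τ w (discreteLaplacian m τ w)
      = normSq m (discreteLaplacian m τ w) := by
    simp only [dirichletForm_eq_sum_mul_discreteLaplacian hm hτ_symm, normSq, sq]
  rw [seminormSq_add_smul, h_cross]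
  linarith [mul_nonneg (sq_nonneg d) (seminormSq_nonneg hτ (discreteLaplacian m τ w))]

lemma normSq_sub_le_mul_sum_normSq_succ_sub (hm : ∀ K, 0 ≤ m K) (v : ℕ → V → ℝ) {i j : ℕ}
    (hij : i ≤ j) :
    normSq m (v j - v i) ≤ (j - i : ℕ) * ∑ n ∈ Finset.Ico i j, normSq m (v (n + 1) - v n) := by
  have h_pointwise (K : V) :
      (v j K - v i K) ^ 2 ≤ (j - i : ℕ) * ∑ n ∈ Finset.Ico i j, (v (n + 1) K - v n K) ^ 2 := by
    rw [← Finset.sum_Ico_sub (fun n => v n K) hij, ← Nat.card_Ico]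
    exact sq_sum_le_card_mul_sum_sq
  calc normSq m (v j - v i)
      ≤ ∑ K, m K * ((j - i : ℕ) * ∑ n ∈ Finset.Ico i j, (v (n + 1) K - v n K) ^ 2) :=
        Finset.sum_le_sum fun K _ => mul_le_mul_of_nonneg_left (h_pointwise K) (hm K)
    _ = (j - i : ℕ) * ∑ n ∈ Finset.Ico i j, normSq m (v (n + 1) - v n) := by
        simp only [normSq, Finset.mul_sum, Pi.sub_apply]
        rw [Finset.sum_comm]
        congr! 2
        ring

end Norms

section TimeGrid

variable {T τ₀ : ℝ} {N : ℕ}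

lemma timeIdx_mono (hT : 0 ≤ T) : Monotone (timeIdx T N) := by
  intro s t hst
  unfold timeIdx
  gcongr

lemma timeIdx_le (t : ℝ) : timeIdx T N t ≤ N :=
  (min_le_right _ _).trans (Nat.sub_le _ _)

lemma measurable_timeIdx : Measurable (timeIdx T N) :=
  (Nat.measurable_floor.comp (measurable_id.div_const _)).min measurable_const

lemma intervalIntegrable_comp_timeIdx (φ : ℕ → ℕ → ℝ) (a b : ℝ) :
    IntervalIntegrable (fun t => φ (timeIdx T N t) (timeIdx T N (t + τ₀))) volume a b := by
  have h_meas : Measurable fun t => φ (timeIdx T N t) (timeIdx T N (t + τ₀)) :=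
    (measurable_of_countable (Function.uncurry φ)).comp
      (measurable_timeIdx.prodMk (measurable_timeIdx.comp (measurable_add_const τ₀)))
  have h_mem (t : ℝ) : timeIdx T N t ∈ Finset.range (N + 1) :=
    Finset.mem_range_succ_iff.2 (timeIdx_le t)
  have h_bound (t : ℝ) : ‖φ (timeIdx T N t) (timeIdx T N (t + τ₀))‖
      ≤ ∑ p ∈ Finset.range (N + 1) ×ˢ Finset.range (N + 1), ‖φ p.1 p.2‖ :=
    Finset.single_le_sum (f := fun p : ℕ × ℕ => ‖φ p.1 p.2‖) (fun p _ => norm_nonneg _)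
      (Finset.mk_mem_product (h_mem t) (h_mem (t + τ₀)))
  exact intervalIntegrable_iff.2
    (IntegrableOn.of_bound (by simp) h_meas.aestronglyMeasurable _ (.of_forall h_bound))

/-- The times `t` for which the grid point `t_{n+1}` lies in `(t, t + τ₀]`. They are encoded through
the capped index `timeIdx`, so that the set is empty for `n + 1 ≥ N`. -/
def crossingTimes (T : ℝ) (N : ℕ) (τ₀ : ℝ) (n : ℕ) : Set ℝ :=
  {t | timeIdx T N t ≤ n ∧ n < timeIdx T N (t + τ₀)}

lemma measurableSet_crossingTimes (n : ℕ) : MeasurableSet (crossingTimes T N τ₀ n) :=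
  (measurableSet_le measurable_timeIdx measurable_const).inter
    (measurableSet_lt measurable_const (measurable_timeIdx.comp (measurable_add_const τ₀)))

lemma mem_Ico_of_mem_crossingTimes (hT : 0 < T) (hτ₀ : 0 ≤ τ₀) {n : ℕ} {t : ℝ} (ht : 0 ≤ t)
    (h : t ∈ crossingTimes T N τ₀ n) :
    t ∈ Set.Ico ((n + 1) * (T / N) - τ₀) ((n + 1) * (T / N)) := by
  obtain ⟨h_le, h_lt⟩ := h
  unfold timeIdx at h_le h_lt
  have hN : 0 < N := by omega
  have hd : 0 < T / N := by positivity
  have h_ceil : n + 1 ≤ ⌊(t + τ₀) / (T / N)⌋₊ := by omega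
  have h_floor : ⌊t / (T / N)⌋₊ < n + 1 := by omega
  rw [Nat.le_floor_iff (by positivity), le_div_iff₀ hd] at h_ceil
  rw [Nat.floor_lt (by positivity), div_lt_iff₀ hd] at h_floor
  push_cast at h_ceil h_floor
  exact ⟨by linarith, h_floor⟩

lemma volume_real_Ioc_inter_crossingTimes_le (hT : 0 < T) (hτ₀ : 0 ≤ τ₀) (n : ℕ) (b : ℝ) :
    volume.real (Set.Ioc 0 b ∩ crossingTimes T N τ₀ n) ≤ τ₀ :=
  calc volume.real (Set.Ioc 0 b ∩ crossingTimes T N τ₀ n)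
      ≤ volume.real (Set.Ico ((n + 1) * (T / N) - τ₀) ((n + 1) * (T / N))) :=
        measureReal_mono (fun _ ht => mem_Ico_of_mem_crossingTimes hT hτ₀ ht.1.1.le ht.2)
          measure_Ico_lt_top.ne
    _ = τ₀ := by rw [Real.volume_real_Ico_of_le (by linarith)]; ring

lemma sum_Ico_timeIdx_eq_sum_indicator (c : ℕ → ℝ) (t : ℝ) :
    ∑ n ∈ Finset.Ico (timeIdx T N t) (timeIdx T N (t + τ₀)), c n
      = ∑ n ∈ Finset.range N, (crossingTimes T N τ₀ n).indicator (fun _ => c n) t := by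
  simp only [Set.indicator_apply, crossingTimes, Set.mem_ofPred_eq, ← Finset.mem_Ico,
    Finset.sum_ite_mem]
  rw [Finset.inter_eq_right.2]
  intro n hn
  exact Finset.mem_range.2 ((Finset.mem_Ico.1 hn).2.trans_le (timeIdx_le _))

lemma integral_sum_Ico_timeIdx_le (hT : 0 < T) (hτ₀ : 0 ≤ τ₀) {b : ℝ} (hb : 0 ≤ b) {c : ℕ → ℝ}
    (hc : ∀ n, 0 ≤ c n) :
    ∫ t in (0 : ℝ)..b, ∑ n ∈ Finset.Ico (timeIdx T N t) (timeIdx T N (t + τ₀)), c n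
      ≤ τ₀ * ∑ n ∈ Finset.range N, c n := by
  have h_int (n : ℕ) :
      IntervalIntegrable ((crossingTimes T N τ₀ n).indicator fun _ => c n) volume 0 b :=
    intervalIntegrable_iff.2 <|
      (integrableOn_const (by simp)).indicator (measurableSet_crossingTimes n)
  simp only [sum_Ico_timeIdx_eq_sum_indicator]
  rw [intervalIntegral.integral_finsetSum fun n _ => h_int n, Finset.mul_sum]
  refine Finset.sum_le_sum fun n _ => ?_
  rw [intervalIntegral.integral_of_le hb, setIntegral_indicator (measurableSet_crossingTimes n),
    setIntegral_const, smul_eq_mul]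
  exact mul_le_mul_of_nonneg_right (volume_real_Ioc_inter_crossingTimes_le hT hτ₀ n b) (hc n)

lemma integral_normSq_timeIdx_translate_le {V : Type} [Fintype V] {m : V → ℝ}
    (hm : ∀ K, 0 ≤ m K) (hT : 0 < T) (hτ₀ : 0 ≤ τ₀) {b : ℝ} (hb : 0 ≤ b) (v : ℕ → V → ℝ) :
    ∫ t in (0 : ℝ)..b, normSq m (v (timeIdx T N (t + τ₀)) - v (timeIdx T N t))
      ≤ τ₀ * (N * ∑ n ∈ Finset.range N, normSq m (v (n + 1) - v n)) := by
  let c (n : ℕ) : ℝ := N * normSq m (v (n + 1) - v n)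
  have h_pointwise (t : ℝ) : normSq m (v (timeIdx T N (t + τ₀)) - v (timeIdx T N t))
      ≤ ∑ n ∈ Finset.Ico (timeIdx T N t) (timeIdx T N (t + τ₀)), c n := by
    refine (normSq_sub_le_mul_sum_normSq_succ_sub hm v
      (timeIdx_mono hT.le (le_add_of_nonneg_right hτ₀))).trans ?_
    rw [← Finset.mul_sum]
    gcongr
    · exact Finset.sum_nonneg fun n _ => normSq_nonneg hm _
    · exact (Nat.sub_le _ _).trans (timeIdx_le _)
  calc ∫ t in (0 : ℝ)..b, normSq m (v (timeIdx T N (t + τ₀)) - v (timeIdx T N t))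
      ≤ ∫ t in (0 : ℝ)..b, ∑ n ∈ Finset.Ico (timeIdx T N t) (timeIdx T N (t + τ₀)), c n :=
        intervalIntegral.integral_mono_on hb
          (intervalIntegrable_comp_timeIdx (fun i j => normSq m (v j - v i)) 0 b)
          (intervalIntegrable_comp_timeIdx (fun i j => ∑ n ∈ Finset.Ico i j, c n) 0 b)
          fun t _ => h_pointwise t
    _ ≤ τ₀ * ∑ n ∈ Finset.range N, c n :=
        integral_sum_Ico_timeIdx_le hT hτ₀ hb fun n =>
          mul_nonneg (Nat.cast_nonneg N) (normSq_nonneg hm _)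
    _ = τ₀ * (N * ∑ n ∈ Finset.range N, normSq m (v (n + 1) - v n)) := by
        simp only [c, Finset.mul_sum]

end TimeGrid

lemma add_sum_range_le_pow_mul {a b : ℕ → ℝ} {q : ℝ} {N : ℕ} (hq : 1 ≤ q)
    (hb : ∀ n, 0 ≤ b n) (h : ∀ n < N, a (n + 1) + b n ≤ q * a n) :
    a N + ∑ n ∈ Finset.range N, b n ≤ q ^ N * a 0 := by
  induction N with
  | zero => simp
  | succ N ih =>
    have ih := ih fun n hn => h n (hn.trans N.lt_succ_self)
    have h_sum : 0 ≤ ∑ n ∈ Finset.range N, b n := Finset.sum_nonneg fun n _ => hb n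
    calc a (N + 1) + ∑ n ∈ Finset.range (N + 1), b n
        = (a (N + 1) + b N) + ∑ n ∈ Finset.range N, b n := by rw [Finset.sum_range_succ]; ring
      _ ≤ q * a N + q * ∑ n ∈ Finset.range N, b n :=
          add_le_add (h N N.lt_succ_self) (le_mul_of_one_le_left h_sum hq)
      _ ≤ q * (q ^ N * a 0) := by rw [← mul_add]; gcongr
      _ = q ^ (N + 1) * a 0 := by ring

section Probability

variable {Ω : Type*} [MeasurableSpace Ω] {P : Measure Ω}

lemma memLp_comp_of_lipschitzWith {E F : Type*} [NormedAddCommGroup E] [NormedAddCommGroup F]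
    [IsFiniteMeasure P] {p : ENNReal} {c : NNReal} {f : E → F} (hf : LipschitzWith c f) {X : Ω → E}
    (hX : MemLp X p P) : MemLp (f ∘ X) p P := by
  have h_lip : LipschitzWith c fun x => f x - f 0 :=
    LipschitzWith.of_dist_le_mul fun x y => by simpa only [dist_sub_right] using hf.dist_le_mul x y
  convert (h_lip.comp_memLp (sub_self _) hX).add (memLp_const (f 0)) using 1
  ext ω
  simp only [Function.comp_apply, Pi.add_apply, sub_add_cancel]

lemma memLp_two_smul_of_indepFun {E : Type*} [NormedAddCommGroup E] [NormedSpace ℝ E]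
    [MeasurableSpace E] [OpensMeasurableSpace E] {X : Ω → ℝ} {Y : Ω → E} (hXY : X ⟂ᵢ[P] Y)
    (hX : MemLp X 2 P) (hY : MemLp Y 2 P) : MemLp (fun ω => X ω • Y ω) 2 P := by
  refine (memLp_two_iff_integrable_sq_norm (hX.1.smul hY.1)).2 ?_
  have h_indep : (fun ω => ‖X ω‖ ^ 2) ⟂ᵢ[P] fun ω => ‖Y ω‖ ^ 2 :=
    hXY.comp (measurable_norm.pow_const 2) (measurable_norm.pow_const 2)
  simpa only [Pi.smul_apply', norm_smul, mul_pow, Pi.mul_def] using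
    h_indep.integrable_mul (hX.integrable_norm_pow two_ne_zero) (hY.integrable_norm_pow two_ne_zero)

lemma measurable_dirichletForm {V : Type*} [Fintype V] (τ : V → V → ℝ) :
    Measurable fun p : (V → ℝ) × (V → ℝ) => dirichletForm τ p.1 p.2 := by
  simp only [dirichletForm_apply]
  fun_prop

lemma integrable_dirichletForm {V : Type*} [Fintype V] (τ : V → V → ℝ) {X Y : Ω → V → ℝ}
    (hX : MemLp X 2 P) (hY : MemLp Y 2 P) :
    Integrable (fun ω => dirichletForm τ (X ω) (Y ω)) P :=
  memLp_one_iff_integrable.1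
    ((dirichletForm τ).toContinuousBilinearMap.memLp_of_bilin (p := 2) (q := 2) 1 hX hY)

variable {V : Type} [Fintype V]

lemma measurable_seminormSq (τ : V → V → ℝ) : Measurable (seminormSq τ) := by
  unfold seminormSq
  fun_prop

lemma integrable_seminormSq (τ : V → V → ℝ) {X : Ω → V → ℝ} (hX : MemLp X 2 P) :
    Integrable (fun ω => seminormSq τ (X ω)) P := by
  simpa only [seminormSq_eq_dirichletForm] using integrable_dirichletForm τ hX hX

lemma integrable_normSq (m : V → ℝ) {X : Ω → V → ℝ} (hX : MemLp X 2 P) :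
    Integrable (fun ω => normSq m (X ω)) P :=
  integrable_finsetSum _ fun K _ => (hX.eval K).integrable_sq.const_mul (m K)

lemma memLp_two_of_integrable_normSq {m : V → ℝ} (hm : ∀ K, 0 < m K) {X : Ω → V → ℝ}
    (hX : AEStronglyMeasurable X P) (h : Integrable (fun ω => normSq m (X ω)) P) :
    MemLp X 2 P := by
  refine MemLp.of_eval fun K => ?_
  have hXK : AEStronglyMeasurable (fun ω => X ω K) P :=
    (continuous_apply K).comp_aestronglyMeasurable hX
  rw [memLp_two_iff_integrable_sq hXK]
  refine (h.div_const (m K)).mono' (hXK.pow 2) (.of_forall fun ω => ?_)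
  rw [Real.norm_of_nonneg (sq_nonneg _), le_div_iff₀ (hm K), mul_comm]
  exact Finset.single_le_sum (f := fun K => m K * X ω K ^ 2)
    (fun K _ => mul_nonneg (hm K).le (sq_nonneg _)) (Finset.mem_univ K)

lemma integrable_normSq_discreteLaplacian (m : V → ℝ) (τ : V → V → ℝ) {X : Ω → V → ℝ}
    (hX : MemLp X 2 P) : Integrable (fun ω => normSq m (discreteLaplacian m τ (X ω))) P :=
  integrable_normSq m ((discreteLaplacian m τ).toContinuousLinearMap.comp_memLp' hX)

lemma integral_seminormSq_add_smul_of_indepFun [IsFiniteMeasure P] (τ : V → V → ℝ) {X : Ω → ℝ}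
    {Y Z : Ω → V → ℝ} (hXYZ : X ⟂ᵢ[P] fun ω => (Y ω, Z ω)) (hX : MemLp X 2 P)
    (hY : MemLp Y 2 P) (hZ : MemLp Z 2 P) (hX_mean : ∫ ω, X ω ∂P = 0) :
    ∫ ω, seminormSq τ (Y ω + X ω • Z ω) ∂P
      = ∫ ω, seminormSq τ (Y ω) ∂P + (∫ ω, X ω ^ 2 ∂P) * ∫ ω, seminormSq τ (Z ω) ∂P := by
  have h_indep : X ⟂ᵢ[P] fun ω => 2 * dirichletForm τ (Y ω) (Z ω) :=
    hXYZ.comp measurable_id ((measurable_dirichletForm τ).const_mul 2)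
  have h_indep_sq : (fun ω => X ω ^ 2) ⟂ᵢ[P] fun ω => seminormSq τ (Z ω) :=
    hXYZ.comp (measurable_id.pow_const 2) ((measurable_seminormSq τ).comp measurable_snd)
  have h_cross_int := (integrable_dirichletForm τ hY hZ).const_mul 2
  have h_cross : ∫ ω, X ω * (2 * dirichletForm τ (Y ω) (Z ω)) ∂P = 0 := by
    rw [h_indep.integral_fun_mul_eq_mul_integral hX.1 h_cross_int.1, hX_mean, zero_mul]
  have h_sq := h_indep_sq.integral_fun_mul_eq_mul_integral
    hX.integrable_sq.1 (integrable_seminormSq τ hZ).1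
  simp only [seminormSq_add_smul]
  rw [integral_add, integral_add, h_cross, h_sq, add_zero]
  · exact integrable_seminormSq τ hY
  · exact h_indep.integrable_mul (hX.integrable one_le_two) h_cross_int
  · exact (integrable_seminormSq τ hY).add
      (h_indep.integrable_mul (hX.integrable one_le_two) h_cross_int)
  · exact h_indep_sq.integrable_mul hX.integrable_sq (integrable_seminormSq τ hZ)

end Probability

namespace Scheme

variable {V Ω : Type} [Fintype V] [Nonempty V] [MeasurableSpace Ω] {T L : ℝ} {g : ℝ → ℝ} {N : ℕ}
  (S : Scheme V Ω T L g N) {n : ℕ}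

instance : IsProbabilityMeasure S.P := S.probP

lemma timeStep_pos (S : Scheme V Ω T L g N) : 0 < T / N :=
  div_pos S.T_pos (Nat.cast_pos.2 S.N_pos)

lemma lipschitzWith (S : Scheme V Ω T L g N) : LipschitzWith L.toNNReal g :=
  LipschitzWith.of_dist_le_mul fun r s => by
    simpa only [Real.dist_eq, Real.coe_toNNReal _ S.L_nonneg] using S.g_lip r s


lemma hasLaw_ΔW (hn : n < N) :
    HasLaw (S.ΔW (n + 1)) (gaussianReal 0 (T / N).toNNReal) S.P :=
  ⟨((S.ΔW_meas n hn).mono (S.G_le _) le_rfl).aemeasurable, S.ΔW_law n hn⟩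

lemma memLp_ΔW (hn : n < N) : MemLp (S.ΔW (n + 1)) 2 S.P :=
  (S.hasLaw_ΔW hn).hasGaussianLaw.memLp_two

lemma integral_ΔW (hn : n < N) : ∫ ω, S.ΔW (n + 1) ω ∂S.P = 0 := by
  rw [(S.hasLaw_ΔW hn).integral_eq, integral_id_gaussianReal]

lemma integral_sq_ΔW (hn : n < N) : ∫ ω, S.ΔW (n + 1) ω ^ 2 ∂S.P = T / N := by
  rw [← variance_of_integral_eq_zero (S.memLp_ΔW hn).aemeasurable (S.integral_ΔW hn),
    (S.hasLaw_ΔW hn).variance_eq, variance_id_gaussianReal, Real.coe_toNNReal _ S.timeStep_pos.le]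

lemma indepFun_ΔW_u (hn : n < N) : S.ΔW (n + 1) ⟂ᵢ[S.P] S.u n :=
  (IndepFun_iff_Indep _ _ _).2
    (indep_of_indep_of_le_right (S.ΔW_indep n hn) (S.u_meas n hn.le).comap_le)

lemma implicit_step (hn : n < N) : ∀ᵐ ω ∂S.P,
    S.u (n + 1) ω + (T / N) • discreteLaplacian S.m S.τ (S.u (n + 1) ω)
      = S.u n ω + S.ΔW (n + 1) ω • (g ∘ S.u n ω) := by
  filter_upwards [S.scheme n hn] with ω hω
  ext K
  have hd := S.timeStep_pos.ne'
  have hm := (S.m_pos K).ne'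
  have hωK := hω K
  simp only [Pi.add_apply, Pi.smul_apply, smul_eq_mul, Function.comp_apply, discreteLaplacian_apply]
  generalize T / (N : ℝ) = d at *
  field_simp at hωK ⊢
  linarith

lemma memLp_comp (S : Scheme V Ω T L g N) {X : Ω → V → ℝ} (hX : MemLp X 2 S.P) :
    MemLp (fun ω => g ∘ X ω) 2 S.P :=
  MemLp.of_eval fun K => memLp_comp_of_lipschitzWith S.lipschitzWith (hX.eval K)

lemma measurable_u (hn : n ≤ N) : Measurable (S.u n) :=
  (S.u_meas n hn).mono (S.G_le n) le_rfl

lemma indepFun_ΔW_prodMk_u (hn : n < N) :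
    S.ΔW (n + 1) ⟂ᵢ[S.P] fun ω => (S.u n ω, g ∘ S.u n ω) := by
  have hg : Measurable fun w : V → ℝ => g ∘ w :=
    measurable_pi_lambda _ fun K =>
      S.lipschitzWith.continuous.measurable.comp (measurable_pi_apply K)
  exact (S.indepFun_ΔW_u hn).comp measurable_id (measurable_id.prodMk hg)

lemma memLp_add_noise (hn : n < N) (hu : MemLp (S.u n) 2 S.P) :
    MemLp (fun ω => S.u n ω + S.ΔW (n + 1) ω • (g ∘ S.u n ω)) 2 S.P :=
  hu.add (memLp_two_smul_of_indepFun
    ((S.indepFun_ΔW_prodMk_u hn).comp measurable_id measurable_snd) (S.memLp_ΔW hn)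
    (S.memLp_comp hu))

lemma memLp_u (hn : n ≤ N) : MemLp (S.u n) 2 S.P := by
  refine memLp_two_of_integrable_normSq S.m_pos (S.measurable_u hn).aestronglyMeasurable ?_
  induction n with
  | zero => exact S.u0_int
  | succ n ih =>
    have hu : MemLp (S.u n) 2 S.P := memLp_two_of_integrable_normSq S.m_pos
      (S.measurable_u (Nat.le_of_succ_le hn)).aestronglyMeasurable (ih (Nat.le_of_succ_le hn))
    have h_meas : Measurable (normSq S.m) := by unfold normSq; fun_prop
    refine (integrable_normSq S.m (S.memLp_add_noise hn hu)).mono'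
      (h_meas.comp (S.measurable_u hn)).aestronglyMeasurable ?_
    filter_upwards [S.implicit_step hn] with ω hω
    rw [Real.norm_of_nonneg (normSq_nonneg (fun K => (S.m_pos K).le) _), ← hω]
    exact normSq_le_normSq_add_smul_discreteLaplacian S.m_pos S.τ_symm S.τ_nonneg
      S.timeStep_pos.le _

lemma integral_seminormSq_add_noise_le (hn : n < N) :
    ∫ ω, seminormSq S.τ (S.u n ω + S.ΔW (n + 1) ω • (g ∘ S.u n ω)) ∂S.P
      ≤ (1 + L ^ 2 * (T / N)) * ∫ ω, seminormSq S.τ (S.u n ω) ∂S.P := by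
  have hu := S.memLp_u hn.le
  have h_lip : ∫ ω, seminormSq S.τ (g ∘ S.u n ω) ∂S.P
      ≤ L ^ 2 * ∫ ω, seminormSq S.τ (S.u n ω) ∂S.P := by
    rw [← integral_const_mul]
    refine integral_mono (integrable_seminormSq _ (S.memLp_comp hu))
      ((integrable_seminormSq _ hu).const_mul _) fun ω => ?_
    simpa only [Real.coe_toNNReal _ S.L_nonneg] using
      seminormSq_comp_le_of_lipschitzWith S.τ_nonneg S.lipschitzWith (S.u n ω)
  rw [integral_seminormSq_add_smul_of_indepFun S.τ (S.indepFun_ΔW_prodMk_u hn) (S.memLp_ΔW hn) hu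
    (S.memLp_comp hu) (S.integral_ΔW hn), S.integral_sq_ΔW hn]
  linarith [mul_le_mul_of_nonneg_left h_lip S.timeStep_pos.le]

lemma integral_seminormSq_succ_add_le (hn : n < N) :
    ∫ ω, seminormSq S.τ (S.u (n + 1) ω) ∂S.P
        + 2 * (T / N * ∫ ω, normSq S.m (discreteLaplacian S.m S.τ (S.u (n + 1) ω)) ∂S.P)
      ≤ (1 + L ^ 2 * (T / N)) * ∫ ω, seminormSq S.τ (S.u n ω) ∂S.P := by
  have hu := S.memLp_u hn
  have h_int := integrable_seminormSq S.τ hu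
  have h_int' :=
    ((integrable_normSq_discreteLaplacian S.m S.τ hu).const_mul (T / N)).const_mul 2
  refine le_trans ?_ (S.integral_seminormSq_add_noise_le hn)
  rw [← integral_const_mul, ← integral_const_mul, ← integral_add h_int h_int']
  refine integral_mono_ae (h_int.add h_int')
    (integrable_seminormSq _ (S.memLp_add_noise hn (S.memLp_u hn.le))) ?_
  filter_upwards [S.implicit_step hn] with ω hω
  rw [← hω]
  exact seminormSq_add_normSq_discreteLaplacian_le (fun K => (S.m_pos K).ne') S.τ_symm S.τ_nonneg
    _ _

lemma sum_integral_normSq_discreteLaplacian_le :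
    ∑ n ∈ Finset.range N,
        T / N * ∫ ω, normSq S.m (discreteLaplacian S.m S.τ (S.u (n + 1) ω)) ∂S.P
      ≤ Real.exp (L ^ 2 * T) / 2 * ∫ ω, seminormSq S.τ (S.u 0 ω) ∂S.P := by
  have h_seminorm (n : ℕ) : 0 ≤ ∫ ω, seminormSq S.τ (S.u n ω) ∂S.P :=
    integral_nonneg fun ω => seminormSq_nonneg S.τ_nonneg _
  have h_laplacian (n : ℕ) :
      0 ≤ T / N * ∫ ω, normSq S.m (discreteLaplacian S.m S.τ (S.u (n + 1) ω)) ∂S.P :=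
    mul_nonneg S.timeStep_pos.le
      (integral_nonneg fun ω => normSq_nonneg (fun K => (S.m_pos K).le) _)
  have h_growth : 0 ≤ L ^ 2 * (T / N) := mul_nonneg (sq_nonneg L) S.timeStep_pos.le
  have h_gronwall := add_sum_range_le_pow_mul (a := fun n => ∫ ω, seminormSq S.τ (S.u n ω) ∂S.P)
    (le_add_of_nonneg_right h_growth) (fun n => mul_nonneg zero_le_two (h_laplacian n))
    fun n hn => S.integral_seminormSq_succ_add_le hn
  have h_exp : (1 + L ^ 2 * (T / N)) ^ N ≤ Real.exp (L ^ 2 * T) := by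
    have h_neg : -(L ^ 2 * T) ≤ N :=
      (neg_nonpos.2 (mul_nonneg (sq_nonneg L) S.T_pos.le)).trans (Nat.cast_nonneg N)
    simpa only [neg_div, sub_neg_eq_add, neg_neg, mul_div_assoc] using
      Real.one_sub_div_pow_le_exp_neg h_neg
  rw [← Finset.mul_sum] at h_gronwall
  linarith [h_seminorm N, mul_le_mul_of_nonneg_right h_exp (h_seminorm 0)]

/-- The noise-free part `u^n - M^n` of the discrete solution, where `M^n` is the value of the
discrete stochastic integral `Ml` on the `n`-th time interval. -/
def noiseFreePart (n : ℕ) (ω : Ω) : V → ℝ :=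
  S.u n ω - ∑ k ∈ Finset.range n, S.ΔW (k + 1) ω • (g ∘ S.u k ω)

lemma ul_sub_Ml_eq_noiseFreePart (t : ℝ) (ω : Ω) (K : V) :
    ul T N S.u t ω K - Ml T N g S.u S.ΔW t ω K = S.noiseFreePart (timeIdx T N t) ω K := by
  simp only [ul, Ml, noiseFreePart, Pi.sub_apply, Finset.sum_apply, Pi.smul_apply, smul_eq_mul,
    Function.comp_apply, mul_comm]

lemma noiseFreePart_succ_sub (hn : n < N) : ∀ᵐ ω ∂S.P,
    S.noiseFreePart (n + 1) ω - S.noiseFreePart n ω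
      = -(T / N) • discreteLaplacian S.m S.τ (S.u (n + 1) ω) := by
  filter_upwards [S.implicit_step hn] with ω hω
  simp only [noiseFreePart, Finset.sum_range_succ]
  linear_combination (norm := module) hω

lemma integral_normSq_noiseFreePart_translate_le {τ₀ b : ℝ} (hτ₀ : 0 ≤ τ₀) (hb : 0 ≤ b) :
    ∀ᵐ ω ∂S.P, ∫ t in (0 : ℝ)..b, normSq S.m
        (S.noiseFreePart (timeIdx T N (t + τ₀)) ω - S.noiseFreePart (timeIdx T N t) ω)
      ≤ τ₀ * (T * ∑ n ∈ Finset.range N,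
          T / N * normSq S.m (discreteLaplacian S.m S.τ (S.u (n + 1) ω))) := by
  have hN : (N : ℝ) ≠ 0 := Nat.cast_ne_zero.2 (Nat.one_le_iff_ne_zero.1 S.N_pos)
  have h_increments : ∀ᵐ ω ∂S.P, ∀ n < N,
      normSq S.m (S.noiseFreePart (n + 1) ω - S.noiseFreePart n ω)
        = (T / N) ^ 2 * normSq S.m (discreteLaplacian S.m S.τ (S.u (n + 1) ω)) := by
    refine ae_all_iff.2 fun n => Filter.eventually_imp_distrib_left.2 fun hn => ?_
    filter_upwards [S.noiseFreePart_succ_sub hn] with ω hω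
    rw [hω, normSq_smul, neg_sq]
  filter_upwards [h_increments] with ω hω
  refine (integral_normSq_timeIdx_translate_le (fun K => (S.m_pos K).le) S.T_pos hτ₀ hb
    fun n => S.noiseFreePart n ω).trans_eq ?_
  simp only [Finset.mul_sum]
  refine Finset.sum_congr rfl fun n hn => ?_
  rw [hω n (Finset.mem_range.1 hn)]
  field_simp

end Scheme

theorem time_translate_estimate_Ml_general {V Ω : Type} [Fintype V] [Nonempty V]
    [MeasurableSpace Ω] {T L : ℝ} {g : ℝ → ℝ} {N : ℕ} (S : Scheme V Ω T L g N) {τ₀ : ℝ}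
    (hτ₀ : 0 ≤ τ₀) (hτ₀T : τ₀ ≤ T) :
    (∫ ω, (∫ t in (0:ℝ)..(T - τ₀),
        normSq S.m (fun K =>
          (ul T N S.u (t + τ₀) ω K - Ml T N g S.u S.ΔW (t + τ₀) ω K)
            - (ul T N S.u t ω K - Ml T N g S.u S.ΔW t ω K))) ∂S.P)
      ≤ T / 2 * Real.exp (L ^ 2 * T) * (∫ ω, seminormSq S.τ (S.u 0 ω) ∂S.P) * τ₀ := by
  have h_int : ∀ n ∈ Finset.range N, Integrable (fun ω =>
      T / N * normSq S.m (discreteLaplacian S.m S.τ (S.u (n + 1) ω))) S.P := fun n hn =>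
    (integrable_normSq_discreteLaplacian _ _ (S.memLp_u (Finset.mem_range.1 hn))).const_mul _
  have hb : 0 ≤ T - τ₀ := sub_nonneg.2 hτ₀T
  simp only [S.ul_sub_Ml_eq_noiseFreePart]
  refine (integral_mono_of_nonneg (.of_forall fun ω => intervalIntegral.integral_nonneg hb
    fun t _ => normSq_nonneg (fun K => (S.m_pos K).le) _)
    (((integrable_finsetSum _ h_int).const_mul T).const_mul τ₀)
    (S.integral_normSq_noiseFreePart_translate_le hτ₀ hb)).trans ?_
  rw [integral_const_mul, integral_const_mul, integral_finsetSum _ h_int]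
  simp only [integral_const_mul]
  have h_energy := mul_le_mul_of_nonneg_left S.sum_integral_normSq_discreteLaplacian_le
    (mul_nonneg hτ₀ S.T_pos.le)
  linarith

/-- **Lemma 3.6, time translate estimate.** For all `T > 0`, `L ≥ 0`,
`g₀ ≥ 0`, `A > 0`, `B ≥ 0`, `D ≥ 0` there is a constant `C ≥ 0`, depending only on
`T, L, g₀, A, B, D`, such that for every scheme (with `Σ m K ≤ A`, `|g 0| ≤ g₀`,
`E[‖u⁰‖_m²] ≤ B`, `E[|u⁰|₁²] ≤ D`) and every `τ₀ ∈ (0, T)`: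
`E[∫₀^{T−τ₀} ‖(u^l − M^l)(t+τ₀) − (u^l − M^l)(t)‖_m² dt] ≤ C·τ₀`. -/
theorem time_translate_estimate_Ml (T L g₀ A B D : ℝ)
    (hT : 0 < T) (hL : 0 ≤ L) (hg₀ : 0 ≤ g₀) (hA : 0 < A) (hB : 0 ≤ B) (hD : 0 ≤ D) :
    ∃ C : ℝ, 0 ≤ C ∧
      ∀ (V : Type) [Fintype V] [Nonempty V]
        (Ω : Type) [MeasurableSpace Ω] (g : ℝ → ℝ) (N : ℕ)
        (S : Scheme V Ω T L g N),
        |g 0| ≤ g₀ → (∑ K, S.m K) ≤ A →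
        (∫ ω, normSq S.m (S.u 0 ω) ∂S.P) ≤ B →
        (∫ ω, seminormSq S.τ (S.u 0 ω) ∂S.P) ≤ D →
        ∀ τ₀ : ℝ, 0 < τ₀ → τ₀ < T →
          (∫ ω, (∫ t in (0:ℝ)..(T - τ₀),
              normSq S.m (fun K =>
                (ul T N S.u (t + τ₀) ω K - Ml T N g S.u S.ΔW (t + τ₀) ω K)
                  - (ul T N S.u t ω K - Ml T N g S.u S.ΔW t ω K))) ∂S.P)
            ≤ C * τ₀ := by
  refine ⟨T / 2 * Real.exp (L ^ 2 * T) * D, by positivity, ?_⟩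
  intro V _ _ Ω _ g N S _ _ _ hD₀ τ₀ hτ₀ hτ₀T
  exact (time_translate_estimate_Ml_general S hτ₀.le hτ₀T.le).trans (by gcongr)
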